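/- arXiv:2506.10572 — 6 statements merged into one kernel-verified Lean document; each statement's English description precedes it below -/
import Mathlib

section
/- Let τ > 0, x ∈ ℝ^K, and b ∈ U^K, and let y be a maximizer of F_{τ,x} over Δ^K ∩ {y : y_i ≤ b_i for all i}. Then there exists a nonnegative vector β ∈ ℝ^K, β_i ≥ 0 for all i, such that (1) y = Softmax_τ(x − β); (2) for every i with β_i > 0, y_i = b_i; and (3) setting r = Σ_{i : β_i = 0} exp(x_i/τ) and s = 1 − Σ_{i : β_i > 0} b_i, if s > 0 then for every i with β_i = 0, y_i = exp(x_i/τ)·s/r. -/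
/-- The probability simplex Δ^K. -/
def simplex (K : ℕ) : Set (Fin K → ℝ) :=
  {p | (∀ i, 0 ≤ p i) ∧ ∑ i, p i = 1}

/-- The entropic objective F_{τ,x}(y) = Σ x_i y_i − τ Σ y_i log y_i
(Real.log 0 = 0 gives the convention 0·log 0 = 0). -/
noncomputable def F {K : ℕ} (τ : ℝ) (x y : Fin K → ℝ) : ℝ :=
  ∑ i, x i * y i - τ * ∑ i, y i * Real.log (y i)

/-- Softmax_τ(x)_i = exp(x_i/τ) / Σ_k exp(x_k/τ). -/
noncomputable def softmax {K : ℕ} (τ : ℝ) (x : Fin K → ℝ) : Fin K → ℝ :=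
  fun i => Real.exp (x i / τ) / ∑ k, Real.exp (x k / τ)

theorem aux_ent (a c : ℝ) (ha : 0 ≤ a) (hc : 0 < c) :
    0 ≤ a * Real.log a - a * Real.log c + c - a := by
  rcases ha.eq_or_lt with h | h
  · subst h; simp; exact hc.le
  · have h1 := Real.log_le_sub_one_of_pos (div_pos hc h)
    rw [Real.log_div hc.ne' h.ne'] at h1
    have h2 := mul_le_mul_of_nonneg_left h1 ha
    have h3 : a * (c / a - 1) = c - a := by field_simp
    rw [h3] at h2
    linarith

theorem aux_exch (K : ℕ) (τ : ℝ) (hτ : 0 < τ) (x b y : Fin K → ℝ)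
    (hy : y ∈ simplex K ∧ ∀ i, y i ≤ b i)
    (hymax : ∀ z, (z ∈ simplex K ∧ ∀ i, z i ≤ b i) → F τ x z ≤ F τ x y)
    (i j : Fin K) (hij : i ≠ j) (ε : ℝ) (hε : 0 < ε) (hi : y i + ε ≤ b i) (hj : ε < y j) :
    y j - ε ≤ (y i + ε) * Real.exp ((x j - x i) / τ) := by
  obtain ⟨⟨h0, h1⟩, hb⟩ := hy
  set d : Fin K → ℝ := fun k => (if k = i then ε else 0) - (if k = j then ε else 0) with hd
  have di : d i = ε := by simp [hd, hij]
  have dj : d j = -ε := by simp [hd, hij.symm]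
  have dk : ∀ k, k ≠ i → k ≠ j → d k = 0 := by
    intro k h h'; simp [hd, h, h']
  have key := hymax (fun k => y k + d k) (by
    refine ⟨⟨?_, ?_⟩, ?_⟩
    · intro k
      show 0 ≤ y k + d k
      by_cases hk : k = i
      · subst hk; rw [di]; linarith [h0 k]
      by_cases hk' : k = j
      · subst hk'; rw [dj]; linarith [h0 k]
      rw [dk k hk hk']; linarith [h0 k]
    · rw [Finset.sum_add_distrib, h1]; simp [hd]
    · intro k
      show y k + d k ≤ b k
      by_cases hk : k = i
      · subst hk; rw [di]; exact hi
      by_cases hk' : k = j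
      · subst hk'; rw [dj]; linarith [hb k]
      rw [dk k hk hk']; linarith [hb k])
  have hpt : ∀ k, d k * (x k - τ * Real.log (y k + d k) - τ) ≤
      (x k * (y k + d k) - τ * ((y k + d k) * Real.log (y k + d k))) -
        (x k * y k - τ * (y k * Real.log (y k))) := by
    intro k
    have main : 0 < y k + d k → d k * (x k - τ * Real.log (y k + d k) - τ) ≤
      (x k * (y k + d k) - τ * ((y k + d k) * Real.log (y k + d k))) -
        (x k * y k - τ * (y k * Real.log (y k))) := by
      intro hp
      have := mul_nonneg hτ.le (aux_ent (y k) (y k + d k) (h0 k) hp)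
      nlinarith [this]
    by_cases hk : k = i
    · apply main; subst hk; rw [di]; linarith [h0 k]
    by_cases hk' : k = j
    · apply main; subst hk'; rw [dj]; linarith [h0 k]
    rw [dk k hk hk']; simp
  have hsum := Finset.sum_le_sum (fun k (_ : k ∈ Finset.univ) => hpt k)
  have hR : ∑ k, ((x k * (y k + d k) - τ * ((y k + d k) * Real.log (y k + d k))) -
        (x k * y k - τ * (y k * Real.log (y k)))) = F τ x (fun k => y k + d k) - F τ x y := by
    simp only [F, Finset.sum_sub_distrib, Finset.mul_sum]
  have hL : ∑ k, d k * (x k - τ * Real.log (y k + d k) - τ) =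
      ε * (x i - τ * Real.log (y i + ε) - τ) - ε * (x j - τ * Real.log (y j - ε) - τ) := by
    have : ∀ G : Fin K → ℝ, ∑ k, d k * G k = ε * G i - ε * G j := by
      intro G; simp [hd, sub_mul, Finset.sum_sub_distrib, ite_mul]
    rw [this, di, dj, ← sub_eq_add_neg]
  rw [hR, hL] at hsum
  have h5 : (x i - τ * Real.log (y i + ε)) ≤ (x j - τ * Real.log (y j - ε)) := by
    by_contra hcon
    push Not at hcon
    nlinarith [mul_pos hε (sub_pos.2 hcon)]
  have hp1 : 0 < y i + ε := by linarith [h0 i]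
  have hp2 : 0 < y j - ε := by linarith
  have h6 : Real.log (y j - ε) ≤ Real.log (y i + ε) + (x j - x i) / τ := by
    rw [← sub_le_iff_le_add', le_div_iff₀ hτ]; nlinarith
  calc y j - ε = Real.exp (Real.log (y j - ε)) := (Real.exp_log hp2).symm
    _ ≤ Real.exp (Real.log (y i + ε) + (x j - x i) / τ) := Real.exp_le_exp.2 h6
    _ = _ := by rw [Real.exp_add, Real.exp_log hp1]

theorem aux_lim (K : ℕ) (τ : ℝ) (hτ : 0 < τ) (x b y : Fin K → ℝ)
    (hy : y ∈ simplex K ∧ ∀ i, y i ≤ b i)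
    (hymax : ∀ z, (z ∈ simplex K ∧ ∀ i, z i ≤ b i) → F τ x z ≤ F τ x y)
    (i j : Fin K) (hi : y i < b i) :
    y j ≤ y i * Real.exp ((x j - x i) / τ) := by
  by_cases hij : i = j
  · subst hij; simp
  rcases (hy.1.1 j).eq_or_lt with h | h
  · rw [← h]; exact mul_nonneg (hy.1.1 i) (Real.exp_pos _).le
  set C := Real.exp ((x j - x i) / τ) with hC
  have hCp : 0 < C := Real.exp_pos _
  by_contra hcon
  push Not at hcon
  obtain ⟨ε, hε, hm⟩ := exists_between
    (show 0 < min (min (b i - y i) (y j)) ((y j - y i * C) / (1 + C)) from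
      lt_min (lt_min (by linarith) h) (div_pos (by linarith) (by linarith)))
  rw [lt_min_iff, lt_min_iff] at hm
  obtain ⟨⟨m1, m2⟩, m3⟩ := hm
  have := aux_exch K τ hτ x b y hy hymax i j hij ε hε (by linarith) m2
  rw [lt_div_iff₀ (by linarith)] at m3
  rw [← hC] at this
  nlinarith

/-- a maximizer of F_{τ,x} over the upper-bounded simplex is a
softmax of shifted logits x − β, with β ≥ 0, saturation where β_i > 0, and the
explicit normalization on the unsaturated coordinates. -/
theorem ubsoftmax_eq_shifted_softmax
    (K : ℕ) (hK : 1 ≤ K) (τ : ℝ) (hτ : 0 < τ) (x b : Fin K → ℝ)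
    (hb : ∀ i, 0 < b i ∧ b i ≤ 1) (hbsum : 1 ≤ ∑ i, b i)
    (y : Fin K → ℝ)
    (hy : y ∈ simplex K ∧ ∀ i, y i ≤ b i)
    (hymax : ∀ z, (z ∈ simplex K ∧ ∀ i, z i ≤ b i) → F τ x z ≤ F τ x y) :
    ∃ β : Fin K → ℝ,
      (∀ i, 0 ≤ β i) ∧
      y = softmax τ (fun i => x i - β i) ∧
      (∀ i, 0 < β i → y i = b i) ∧
      (0 < 1 - ∑ i ∈ Finset.univ.filter (fun i => 0 < β i), b i →
        ∀ i, β i = 0 →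
          y i = Real.exp (x i / τ) *
              (1 - ∑ j ∈ Finset.univ.filter (fun j => 0 < β j), b j) /
            ∑ j ∈ Finset.univ.filter (fun j => β j = 0), Real.exp (x j / τ)) := by
  obtain ⟨i1, -, hi1⟩ : ∃ i ∈ Finset.univ, 0 < y i := by
    apply Finset.exists_lt_of_sum_lt
    rw [hy.1.2]; simp
  have hpos : ∀ i, 0 < y i := by
    intro i
    by_contra h
    have h0 : y i = 0 := le_antisymm (not_lt.1 h) (hy.1.1 i)
    have := aux_lim K τ hτ x b y hy hymax i i1 (by rw [h0]; exact (hb i).1)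
    rw [h0, zero_mul] at this
    linarith
  obtain ⟨m, -, hm⟩ := Finset.exists_min_image Finset.univ
    (fun i => x i - τ * Real.log (y i)) ⟨i1, Finset.mem_univ _⟩
  set L := x m - τ * Real.log (y m) with hL
  have hE : ∀ i, y i = Real.exp ((x i - (x i - τ * Real.log (y i) - L)) / τ)
      * Real.exp (-L / τ) := by
    intro i
    rw [← Real.exp_add]
    have : (x i - (x i - τ * Real.log (y i) - L)) / τ + -L / τ = Real.log (y i) := by
      field_simp; ring
    rw [this, Real.exp_log (hpos i)]
  have hsat : ∀ i, 0 < x i - τ * Real.log (y i) - L → y i = b i := by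
    intro i hi
    by_contra hne
    have h1 := aux_lim K τ hτ x b y hy hymax i m (lt_of_le_of_ne (hy.2 i) hne)
    have h2 := Real.log_le_log (hpos m) h1
    rw [Real.log_mul (hpos i).ne' (Real.exp_pos _).ne', Real.log_exp,
      ← sub_le_iff_le_add', le_div_iff₀ hτ] at h2
    nlinarith
  have hc : 0 < Real.exp (-L / τ) := Real.exp_pos _
  have hβ : ∀ i, 0 ≤ x i - τ * Real.log (y i) - L := fun i =>
    sub_nonneg.2 (hm i (Finset.mem_univ _))
  refine ⟨fun i => x i - τ * Real.log (y i) - L, hβ, ?_, hsat, ?_⟩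
  · have hs := hy.1.2
    rw [Finset.sum_congr rfl (fun i _ => hE i), ← Finset.sum_mul] at hs
    funext i
    simp only [softmax]
    rw [eq_div_iff (by intro h; rw [h] at hs; simp at hs)]
    conv_lhs => rw [hE i]
    rw [mul_assoc, mul_comm (Real.exp (-L / τ)), hs, mul_one]
  · intro _ i hi
    beta_reduce at hi ⊢
    have hz : ∀ j, x j - τ * Real.log (y j) - L = 0 →
        y j = Real.exp (x j / τ) * Real.exp (-L / τ) := by
      intro j hj
      have := hE j
      rwa [hj, sub_zero] at this
    have hs : 1 - ∑ j ∈ Finset.univ.filter (fun j => 0 < x j - τ * Real.log (y j) - L), b j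
        = (∑ j ∈ Finset.univ.filter (fun j => x j - τ * Real.log (y j) - L = 0),
            Real.exp (x j / τ)) * Real.exp (-L / τ) := by
      rw [Finset.sum_mul, ← hy.1.2,
        ← Finset.sum_filter_add_sum_filter_not Finset.univ
          (fun j => 0 < x j - τ * Real.log (y j) - L) y,
        Finset.sum_congr rfl (fun j hj => hsat j (Finset.mem_filter.1 hj).2),
        add_sub_cancel_left]
      refine Finset.sum_congr ?_ (fun j hj => hz j (Finset.mem_filter.1 hj).2)
      ext j
      simp only [Finset.mem_filter, Finset.mem_univ, true_and, not_lt]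
      exact ⟨fun h => le_antisymm h (hβ j), fun h => h.le⟩
    have hr : 0 < ∑ j ∈ Finset.univ.filter (fun j => x j - τ * Real.log (y j) - L = 0),
            Real.exp (x j / τ) :=
      Finset.sum_pos (fun j _ => Real.exp_pos _)
        ⟨i, Finset.mem_filter.2 ⟨Finset.mem_univ _, hi⟩⟩
    rw [hs, eq_div_iff hr.ne']
    conv_lhs => rw [hz i hi]
    ring
end

section
/- Let τ > 0, x ∈ ℝ^K, and let a, b ∈ ℝ be scalars such that the constant vectors a·1_K and b·1_K form a feasible box constraint, i.e. 0 ≤ a < 1, K·a ≤ 1, 0 < b ≤ 1, K·b ≥ 1, and a ≤ b. Then there exist scalars c, C ∈ ℝ with c ≤ C such that the maximizer of F_{τ,x} over Δ^K ∩ {y : a ≤ y_i ≤ b for all i} equals Softmax_τ(clip(x,c,C)), where clip(x,c,C) ∈ ℝ^K is defined componentwise by clip(x,c,C)_i = max(c, min(x_i, C)). -/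
lemma entropy_tangent (u z : ℝ) (hu : 0 ≤ u) (hz : 0 < z) (hne : u ≠ z) :
    z * Real.log z + (Real.log z + 1) * (u - z) < u * Real.log u := by
  rcases hu.eq_or_lt with h | h
  · subst h
    simp
    nlinarith
  · have h1 := Real.log_lt_sub_one_of_pos (div_pos hz h)
      (by intro h2; rw [div_eq_one_iff_eq h.ne'] at h2; exact hne h2.symm)
    rw [Real.log_div hz.ne' h.ne'] at h1
    have h2 := mul_lt_mul_of_pos_left h1 h
    have h3 : u * (z / u - 1) = z - u := by field_simp
    rw [h3] at h2
    nlinarith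

lemma slope_ineq (τ : ℝ) (hτ : 0 < τ) (x l a b u : ℝ) (hau : a ≤ u) (hub : u ≤ b)
    (hb : 0 < b) (hab : a ≤ b) :
    (x - l - τ * Real.log (max a (min (Real.exp ((x - l) / τ)) b))) *
      (u - max a (min (Real.exp ((x - l) / τ)) b)) ≤ 0 := by
  have he := Real.exp_pos ((x - l) / τ)
  have hl : τ * Real.log (Real.exp ((x - l) / τ)) = x - l := by
    rw [Real.log_exp]; field_simp
  generalize Real.exp ((x - l) / τ) = e at *
  rw [← hl, ← mul_sub, mul_assoc]
  apply mul_nonpos_of_nonneg_of_nonpos hτ.le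
  rcases le_total e b with h | h
  · rw [min_eq_left h]
    rcases le_total a e with h' | h'
    · rw [max_eq_right h']; simp
    · rw [max_eq_left h']
      have := Real.log_le_log he h'
      exact mul_nonpos_of_nonpos_of_nonneg (by linarith) (by linarith)
  · rw [min_eq_right h, max_eq_right hab]
    have := Real.log_le_log hb h
    exact mul_nonpos_of_nonneg_of_nonpos (by linarith) (by linarith)

/-- for scalar box bounds a·1_K, b·1_K, the box-constrained
maximizer is a softmax of clipped logits: ∃ c ≤ C with
BCSoftmax_τ(x,(a·1,b·1)) = Softmax_τ(clip(x,c,C)). -/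
theorem bcsoftmax_scalar_bounds_eq_softmax_clip
    (K : ℕ) (hK : 1 ≤ K) (τ : ℝ) (hτ : 0 < τ) (x : Fin K → ℝ)
    (a b : ℝ)
    (ha0 : 0 ≤ a) (ha1 : a < 1) (haK : (K : ℝ) * a ≤ 1)
    (hb0 : 0 < b) (hb1 : b ≤ 1) (hbK : 1 ≤ (K : ℝ) * b)
    (hab : a ≤ b)
    (y : Fin K → ℝ)
    (hy : y ∈ simplex K ∧ ∀ i, a ≤ y i ∧ y i ≤ b)
    (hymax : ∀ z, (z ∈ simplex K ∧ ∀ i, a ≤ z i ∧ z i ≤ b) → F τ x z ≤ F τ x y) :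
    ∃ c C : ℝ, c ≤ C ∧ y = softmax τ (fun i => max c (min (x i) C)) := by
  have : Nonempty (Fin K) := ⟨⟨0, hK⟩⟩
  have hKpos : (0 : ℝ) < K := by exact_mod_cast hK
  have haK' : a ≤ 1 / (K : ℝ) := by rw [le_div_iff₀ hKpos]; linarith
  have hbK' : 1 / (K : ℝ) ≤ b := by rw [div_le_iff₀ hKpos]; linarith
  have hexp : ∀ t s : ℝ, Real.exp ((t - (s + τ * Real.log K)) / τ)
      = Real.exp ((t - s) / τ) * (1 / (K : ℝ)) := by
    intro t s
    have : (t - (s + τ * Real.log K)) / τ = (t - s) / τ - Real.log K := by field_simp; ring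
    rw [this, Real.exp_sub, Real.exp_log hKpos]; ring
  have hsum1 : ∑ _i : Fin K, 1 / (K : ℝ) = 1 := by simp [hKpos.ne']
  obtain ⟨l, hl⟩ : ∃ l : ℝ, ∑ i, max a (min (Real.exp ((x i - l) / τ)) b) = 1 := by
    have hc : Continuous fun l : ℝ => ∑ i, max a (min (Real.exp ((x i - l) / τ)) b) := by
      fun_prop
    obtain ⟨i0, hi0⟩ := Finite.exists_min x
    obtain ⟨i1, hi1⟩ := Finite.exists_max x
    refine mem_range_of_exists_le_of_exists_ge hc ⟨x i1 + τ * Real.log K, ?_⟩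
      ⟨x i0 + τ * Real.log K, ?_⟩
    · rw [← hsum1]
      refine Finset.sum_le_sum fun i _ => max_le haK' ((min_le_left _ _).trans ?_)
      rw [hexp]
      refine mul_le_of_le_one_left (by positivity) (Real.exp_le_one_iff.2 ?_)
      exact div_nonpos_of_nonpos_of_nonneg (by linarith [hi1 i]) hτ.le
    · rw [← hsum1]
      refine Finset.sum_le_sum fun i _ => le_max_of_le_right (le_min ?_ hbK')
      rw [hexp]
      refine le_mul_of_one_le_left (by positivity) (Real.one_le_exp ?_)
      exact div_nonneg (by linarith [hi0 i]) hτ.le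
  obtain ⟨z, hz⟩ : ∃ z : Fin K → ℝ, ∀ i, z i = max a (min (Real.exp ((x i - l) / τ)) b) :=
    ⟨_, fun _ => rfl⟩
  have hzpos : ∀ i, 0 < z i := fun i => by
    rw [hz]; exact lt_max_of_lt_right (lt_min (Real.exp_pos _) hb0)
  have hza : ∀ i, a ≤ z i := fun i => by rw [hz]; exact le_max_left _ _
  have hzb : ∀ i, z i ≤ b := fun i => by rw [hz]; exact max_le hab (min_le_right _ _)
  have hzs : ∑ i, z i = 1 := by rw [← hl]; exact Finset.sum_congr rfl fun i _ => hz i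
  have hF := hymax z ⟨⟨fun i => (hzpos i).le, hzs⟩, fun i => ⟨hza i, hzb i⟩⟩
  have hyz : y = z := by
    by_contra hne
    obtain ⟨j, hj⟩ := Function.ne_iff.1 hne
    have hd : ∀ i, y i ≠ z i → x i * y i - τ * (y i * Real.log (y i))
        < x i * z i - τ * (z i * Real.log (z i)) + (l - τ) * (y i - z i) := by
      intro i hi
      have h1 := mul_lt_mul_of_pos_left
        (entropy_tangent (y i) (z i) (hy.1.1 i) (hzpos i) hi) hτ
      have h2 := slope_ineq τ hτ (x i) l a b (y i) (hy.2 i).1 (hy.2 i).2 hb0 hab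
      rw [← hz] at h2
      linarith
    have hlt : ∑ i, (x i * y i - τ * (y i * Real.log (y i)))
        < ∑ i, (x i * z i - τ * (z i * Real.log (z i)) + (l - τ) * (y i - z i)) := by
      refine Finset.sum_lt_sum (fun i _ => ?_) ⟨j, Finset.mem_univ _, hd j hj⟩
      by_cases h : y i = z i
      · rw [h]; simp
      · exact (hd i h).le
    rw [Finset.sum_add_distrib, ← Finset.mul_sum, Finset.sum_sub_distrib,
      Finset.sum_sub_distrib, Finset.sum_sub_distrib, hzs, hy.1.2, ← Finset.mul_sum,
      ← Finset.mul_sum] at hlt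
    unfold F at hF
    linarith
  obtain ⟨m, hm⟩ := Finite.exists_min z
  have hlog : Real.log (z m) ≤ Real.log b := Real.log_le_log (hzpos m) (hzb m)
  refine ⟨l + τ * Real.log (z m), l + τ * Real.log b, by
    have := mul_le_mul_of_nonneg_left hlog hτ.le
    linarith, ?_⟩
  have hmono : Monotone fun t : ℝ => Real.exp (t / τ) := fun s t h =>
    Real.exp_le_exp.2 (div_le_div_of_nonneg_right h hτ.le)
  have hsplit : ∀ t : ℝ, Real.exp (t / τ) = Real.exp (l / τ) * Real.exp ((t - l) / τ) := by
    intro t; rw [← Real.exp_add]; congr 1; ring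
  have hconst : ∀ w : ℝ, 0 < w →
      Real.exp ((l + τ * Real.log w) / τ) = Real.exp (l / τ) * w := by
    intro w hw
    rw [hsplit]
    have : (l + τ * Real.log w - l) / τ = Real.log w := by field_simp; ring
    rw [this, Real.exp_log hw]
  have key : ∀ i, Real.exp (max (l + τ * Real.log (z m)) (min (x i) (l + τ * Real.log b)) / τ)
      = Real.exp (l / τ) * z i := by
    intro i
    have h1 := hmono.map_max (a := l + τ * Real.log (z m)) (b := min (x i) (l + τ * Real.log b))
    have h2 := hmono.map_min (a := x i) (b := l + τ * Real.log b)
    rw [h1, h2, hconst _ (hzpos m), hconst _ hb0, hsplit (x i),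
      ← mul_min_of_nonneg _ _ (Real.exp_pos _).le, ← mul_max_of_nonneg _ _ (Real.exp_pos _).le]
    congr 1
    rw [← max_eq_right (hm i), hz i, ← max_assoc, max_eq_left (hza m)]
  funext i
  unfold softmax
  simp only [key]
  rw [← Finset.mul_sum, hzs, hyz]
  field_simp
end

section
/- Let τ > 0, x ∈ ℝ^K, and let a, b ∈ ℝ be scalars with 0 ≤ a < 1/K and 1/K < b ≤ 1. Let q be the maximizer of F_{τ,x} over Δ^K ∩ {y : a ≤ y_i ≤ b for all i}. Then every index attaining the maximum of Softmax_τ(x) also attains the maximum of q; that is, {i : x_i = max_j x_j} ⊆ {i : q_i = max_j q_j}. Moreover, for all indices i, j, x_i ≤ x_j implies q_i ≤ q_j. -/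
theorem sum_two_change {K : ℕ} (G : Fin K → ℝ → ℝ) (q : Fin K → ℝ) (m : ℝ) (i j : Fin K)
    (hij : i ≠ j) :
    ∑ k, G k (if k = i ∨ k = j then m else q k) - ∑ k, G k (q k)
      = (G i m - G i (q i)) + (G j m - G j (q j)) := by
  rw [← Finset.sum_sub_distrib, Fintype.sum_eq_add i j hij]
  · simp
  · rintro k ⟨h1, h2⟩
    simp [h1, h2]

/-- for scalar bounds 0 ≤ a < 1/K and 1/K < b ≤ 1, the
box-constrained maximizer q preserves the argmax of x (every index maximizing
x maximizes q) and is monotone with respect to the logits. -/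
theorem bcsoftmax_scalar_bounds_preserves_argmax
    (K : ℕ) (hK : 1 ≤ K) (τ : ℝ) (hτ : 0 < τ) (x : Fin K → ℝ)
    (a b : ℝ)
    (ha0 : 0 ≤ a) (ha1 : a < 1 / (K : ℝ))
    (hb0 : 1 / (K : ℝ) < b) (hb1 : b ≤ 1)
    (q : Fin K → ℝ)
    (hq : q ∈ simplex K ∧ ∀ i, a ≤ q i ∧ q i ≤ b)
    (hqmax : ∀ z, (z ∈ simplex K ∧ ∀ i, a ≤ z i ∧ z i ≤ b) → F τ x z ≤ F τ x q) :
    (∀ i : Fin K, (∀ j, x j ≤ x i) → ∀ j, q j ≤ q i) ∧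
      ∀ i j : Fin K, x i ≤ x j → q i ≤ q j := by
  have key : ∀ i j : Fin K, x i ≤ x j → q i ≤ q j := by
    intro i j hx
    by_contra! hlt
    have hij : i ≠ j := by
      rintro rfl
      exact lt_irrefl _ hlt
    obtain ⟨⟨hq0, hq1⟩, hab⟩ := hq
    obtain ⟨m, hm⟩ : ∃ m : ℝ, m = (q i + q j) / 2 := ⟨_, rfl⟩
    have hS := sum_two_change (fun _ y => y) q m i j hij
    have hX := sum_two_change (fun k y => x k * y) q m i j hij
    have hL := sum_two_change (fun _ y => y * Real.log y) q m i j hij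
    have hc := Real.strictConvexOn_mul_log.2 (Set.mem_Ici.2 (hq0 i)) (Set.mem_Ici.2 (hq0 j))
      hlt.ne' (by norm_num : (0:ℝ) < 1/2) (by norm_num : (0:ℝ) < 1/2) (by norm_num)
    have he : (1/2 : ℝ) • q i + (1/2 : ℝ) • q j = m := by
      rw [hm]; simp only [smul_eq_mul]; ring
    rw [he] at hc
    simp only [smul_eq_mul] at hc
    have hz := hqmax (fun k => if k = i ∨ k = j then m else q k) ?_
    · simp only [F] at hz
      have h1 : 0 ≤ (x j - x i) * (q i - q j) :=
        mul_nonneg (by linarith) (by linarith)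
      have h2 : x i * m - x i * q i + (x j * m - x j * q j) = (x j - x i) * (q i - q j) / 2 := by
        rw [hm]; ring
      have h3 := mul_pos hτ (sub_pos.2 hc)
      have h4 := congrArg (fun t => τ * t) hL
      simp only [mul_sub, mul_add] at h3 h4
      linarith
    · have hi := hab i
      have hj := hab j
      have h0 : ∀ k, a ≤ (if k = i ∨ k = j then m else q k) ∧
          (if k = i ∨ k = j then m else q k) ≤ b := by
        intro k
        split_ifs
        · constructor <;> linarith [hi.1, hi.2, hj.1, hj.2]
        · exact hab k
      refine ⟨⟨fun k => ha0.trans (h0 k).1, ?_⟩, h0⟩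
      show ∑ k, (if k = i ∨ k = j then m else q k) = 1
      linarith
  exact ⟨fun i h j => key j i (h j), key⟩
end

section
/- Let τ > 0, x ∈ ℝ^K, and let a ∈ ℝ be a scalar with 0 ≤ a < 1/K. Let q be the maximizer of F_{τ,x} over Δ^K ∩ {y : a ≤ y_i ≤ 1 for all i} (i.e. only a lower bound, the upper bound being 1). Then the sets of maximizing indices coincide exactly: {i : x_i = max_j x_j} = {i : q_i = max_j q_j}. -/
theorem aux_sum {K : ℕ} (g : Fin K → ℝ → ℝ) (q : Fin K → ℝ) (i j : Fin K) (hij : i ≠ j)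
    (u v : ℝ) :
    ∑ k, g k (Function.update (Function.update q i u) j v k) =
      ∑ k, g k (q k) + ((g i u - g i (q i)) + (g j v - g j (q j))) := by
  have h : ∑ k, (g k (Function.update (Function.update q i u) j v k) - g k (q k)) =
      (g i u - g i (q i)) + (g j v - g j (q j)) := by
    rw [Fintype.sum_eq_add i j hij]
    · simp [hij]
    · rintro k ⟨h1, h2⟩
      simp [h1, h2]
  rw [Finset.sum_sub_distrib] at h
  linarith

theorem aux_pert {K : ℕ} (τ : ℝ) (x : Fin K → ℝ) (a : ℝ) (ha0 : 0 ≤ a) (q : Fin K → ℝ)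
    (hq : q ∈ simplex K ∧ ∀ i, a ≤ q i ∧ q i ≤ 1)
    (hqmax : ∀ z, (z ∈ simplex K ∧ ∀ i, a ≤ z i ∧ z i ≤ 1) → F τ x z ≤ F τ x q)
    (i j : Fin K) (hij : i ≠ j) (u v : ℝ) (hu : a ≤ u) (hv : a ≤ v) (huv : u + v = q i + q j) :
    x i * u + x j * v - τ * (u * Real.log u + v * Real.log v) ≤
      x i * q i + x j * q j - τ * (q i * Real.log (q i) + q j * Real.log (q j)) := by
  obtain ⟨⟨h0, h1⟩, h2⟩ := hq
  have hs : ∑ k, Function.update (Function.update q i u) j v k = 1 := by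
    have := aux_sum (fun _ y => y) q i j hij u v
    linarith
  have hl : ∀ k, a ≤ Function.update (Function.update q i u) j v k := by
    intro k
    by_cases hk : k = j
    · subst hk; simpa using hv
    · by_cases hk' : k = i
      · subst hk'; simpa [hk] using hu
      · simpa [hk, hk'] using (h2 k).1
  have h := hqmax (Function.update (Function.update q i u) j v)
    ⟨⟨fun k => ha0.trans (hl k), hs⟩, fun k => ⟨hl k, by
      rw [← hs]
      exact Finset.single_le_sum (fun k _ => ha0.trans (hl k)) (Finset.mem_univ k)⟩⟩
  unfold F at h
  have e1 := aux_sum (fun k y => x k * y) q i j hij u v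
  have e2 := aux_sum (fun _ y => y * Real.log y) q i j hij u v
  rw [e1, e2] at h
  linarith

theorem aux_log (u y : ℝ) (hu : 0 < u) (hy : 0 ≤ y) :
    y * Real.log y ≤ y * (Real.log u + (y / u - 1)) := by
  rcases hy.eq_or_lt with h | h
  · simp [← h]
  · apply mul_le_mul_of_nonneg_left _ hy
    have := Real.log_le_sub_one_of_pos (div_pos h hu)
    rw [Real.log_div h.ne' hu.ne'] at this
    linarith

/-- with only a scalar lower bound 0 ≤ a < 1/K (upper bound 1),
the constrained maximizer q has exactly the same set of maximizing indices
as x. -/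
theorem bcsoftmax_lower_bound_exactly_preserves_argmax
    (K : ℕ) (hK : 1 ≤ K) (τ : ℝ) (hτ : 0 < τ) (x : Fin K → ℝ)
    (a : ℝ) (ha0 : 0 ≤ a) (ha1 : a < 1 / (K : ℝ))
    (q : Fin K → ℝ)
    (hq : q ∈ simplex K ∧ ∀ i, a ≤ q i ∧ q i ≤ 1)
    (hqmax : ∀ z, (z ∈ simplex K ∧ ∀ i, a ≤ z i ∧ z i ≤ 1) → F τ x z ≤ F τ x q) :
    ∀ i : Fin K, (∀ j, x j ≤ x i) ↔ ∀ j, q j ≤ q i := by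
  have avg : ∀ i j, x j ≤ x i → q j ≤ q i := by
    intro i j hx
    by_contra hlt
    push Not at hlt
    have hij : i ≠ j := by rintro rfl; exact lt_irrefl _ hlt
    have hi := (hq.2 i).1
    have h := aux_pert τ x a ha0 q hq hqmax i j hij ((q i + q j) / 2) ((q i + q j) / 2)
      (by linarith) (by linarith) (by ring)
    have hc := Real.strictConvexOn_mul_log.2
    have hc := hc (Set.mem_Ici.2 (hq.1.1 i)) (Set.mem_Ici.2 (hq.1.1 j)) hlt.ne
      (show (0 : ℝ) < 1 / 2 by norm_num) (show (0 : ℝ) < 1 / 2 by norm_num) (by norm_num)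
    simp only [smul_eq_mul] at hc
    rw [show 1 / 2 * q i + 1 / 2 * q j = (q i + q j) / 2 by ring] at hc
    have h3 := mul_lt_mul_of_pos_left hc hτ
    have h4 := mul_nonneg (sub_nonneg.2 hx) (sub_nonneg.2 hlt.le)
    nlinarith
  intro i
  constructor
  · intro h j
    exact avg i j (h j)
  · intro h j
    by_contra hlt
    push Not at hlt
    have hij : j ≠ i := by rintro rfl; exact lt_irrefl _ hlt
    have heq : q j = q i := le_antisymm (h j) (avg j i hlt.le)
    have hK0 : (0 : ℝ) < K := by exact_mod_cast hK
    have hua : a < q i := by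
      refine ha1.trans_le ?_
      rw [div_le_iff₀ hK0, ← hq.1.2]
      calc ∑ k, q k ≤ ∑ _k : Fin K, q i := Finset.sum_le_sum fun k _ => h k
        _ = q i * K := by simp [mul_comm]
    have hu : 0 < q i := ha0.trans_lt hua
    obtain ⟨t, ht0, ht1, ht2⟩ : ∃ t, 0 < t ∧ t ≤ q i - a ∧ 4 * τ * t ≤ (x j - x i) * q i := by
      have hd : 0 < (x j - x i) * q i / (4 * τ) :=
        div_pos (mul_pos (sub_pos.2 hlt) hu) (by linarith)
      refine ⟨min (q i - a) ((x j - x i) * q i / (4 * τ)), lt_min (by linarith) hd,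
        min_le_left _ _, ?_⟩
      have := min_le_right (q i - a) ((x j - x i) * q i / (4 * τ))
      rw [le_div_iff₀ (by linarith)] at this
      linarith
    have hp := aux_pert τ x a ha0 q hq hqmax j i hij (q i + t) (q i - t)
      (by linarith) (by linarith) (by rw [heq]; ring)
    rw [heq] at hp
    have l1 := aux_log (q i) (q i + t) hu (by linarith)
    have l2 := aux_log (q i) (q i - t) hu (by linarith)
    have l3 : (q i + t) * (Real.log (q i) + ((q i + t) / q i - 1)) +
        (q i - t) * (Real.log (q i) + ((q i - t) / q i - 1)) =
        2 * (q i * Real.log (q i)) + 2 * t ^ 2 / q i := by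
      field_simp
      ring
    have l4 := mul_le_mul_of_nonneg_left (add_le_add l1 l2) hτ.le
    rw [l3] at l4
    have l5 : (x j - x i) * t ≤ τ * (2 * t ^ 2 / q i) := by linarith
    have l6 : τ * (2 * t ^ 2 / q i) * q i = 2 * τ * t * t := by
      field_simp
    have l7 := mul_le_mul_of_nonneg_right l5 hu.le
    rw [l6] at l7
    have l8 := mul_le_mul_of_nonneg_right ht2 ht0.le
    have l9 : 0 < τ * t * t := by positivity
    nlinarith
end

section
/- Let x ∈ ℝ^K and (a,b) ∈ B^K be such that a_i = b_i for all i ≤ k, for some k ∈ {0,…,K−1}, and suppose s_k := 1 − Σ_{i=1}^{k} a_i > 0. Let u ∈ ℝ^{K−k} be the maximizer of F_{1,(x_{k+1},…,x_K)} over Δ^{K−k} ∩ {u : a_{k+j}/s_k ≤ u_j ≤ b_{k+j}/s_k for all j}. Then the maximizer y of F_{1,x} over Δ^K ∩ {y : a_i ≤ y_i ≤ b_i for all i} satisfies y_i = a_i for all i ≤ k and y_i = s_k · u_{i−k} for all i > k. -/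
/-- s_k = 1 − Σ_{i=1}^k a_i (0-based: indices i with i < k). -/
noncomputable def sHead {K : ℕ} (a : Fin K → ℝ) (k : ℕ) : ℝ :=
  1 - ∑ i ∈ Finset.univ.filter (fun i : Fin K => (i : ℕ) < k), a i

theorem F_midpoint {n : ℕ} (x u v : Fin n → ℝ) (hu : ∀ i, 0 ≤ u i) (hv : ∀ i, 0 ≤ v i)
    (hne : u ≠ v) :
    (F 1 x u + F 1 x v) / 2 < F 1 x (fun i => (u i + v i) / 2) := by
  have hF : ∀ w : Fin n → ℝ, F 1 x w = ∑ i, (x i * w i + Real.negMulLog (w i)) := by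
    intro w
    simp only [F, Real.negMulLog, Finset.sum_add_distrib, neg_mul, Finset.sum_neg_distrib, one_mul]
    ring
  rw [hF, hF, hF, ← Finset.sum_add_distrib, Finset.sum_div]
  obtain ⟨i0, hi0⟩ := Function.ne_iff.mp hne
  have key : ∀ p q : ℝ, 0 ≤ p → 0 ≤ q → p ≠ q →
      (Real.negMulLog p + Real.negMulLog q) / 2 < Real.negMulLog ((p + q) / 2) := by
    intro p q hp hq hpq
    have h := Real.strictConcaveOn_negMulLog.2 (Set.mem_Ici.2 hp) (Set.mem_Ici.2 hq) hpq
      (show (0 : ℝ) < 1 / 2 by norm_num) (show (0 : ℝ) < 1 / 2 by norm_num) (by norm_num)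
    simp only [smul_eq_mul] at h
    have e : (p + q) / 2 = 1 / 2 * p + 1 / 2 * q := by ring
    rw [e]
    linarith
  apply Finset.sum_lt_sum
  · intro i _
    by_cases h : u i = v i
    · have e : (v i + v i) / 2 = v i := by ring
      simp only [h, e]
      linarith
    · have := key _ _ (hu i) (hv i) h
      linarith
  · exact ⟨i0, Finset.mem_univ _, by
      have := key _ _ (hu i0) (hv i0) hi0
      linarith⟩

theorem sum_head_tail {K : ℕ} (k : ℕ) (e : Fin (K - k) → Fin K) (he : ∀ j, (e j : ℕ) = k + j) (f : Fin K → ℝ) :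
    ∑ i, f i = ∑ i ∈ Finset.univ.filter (fun i : Fin K => (i : ℕ) < k), f i +
      ∑ j : Fin (K - k), f (e j) := by
  rw [← Finset.sum_filter_add_sum_filter_not Finset.univ (fun i : Fin K => (i : ℕ) < k) f]
  congr 1
  symm
  refine Finset.sum_bij (fun j _ => e j) ?_ ?_ ?_ ?_
  · intro j _
    simp [he]
  · intro j _ j' _ h
    have h3 := congrArg Fin.val h
    rw [he, he] at h3
    ext
    omega
  · intro i hi
    simp only [Finset.mem_filter, Finset.mem_univ, true_and, not_lt] at hi
    refine ⟨⟨i - k, by have := i.isLt; omega⟩, Finset.mem_univ _, ?_⟩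
    ext
    rw [he]
    simp only
    omega
  · intro j _
    rfl

theorem F_head_tail {K : ℕ} (k : ℕ) (e : Fin (K - k) → Fin K) (he : ∀ j, (e j : ℕ) = k + j) (x a y : Fin K → ℝ) (s : ℝ) (hs : 0 < s)
    (v : Fin (K - k) → ℝ) (hv : ∑ j, v j = 1)
    (h1 : ∀ i : Fin K, (i : ℕ) < k → y i = a i)
    (h2 : ∀ j : Fin (K - k), y (e j) = s * v j) :
    F 1 x y = ∑ i ∈ Finset.univ.filter (fun i : Fin K => (i : ℕ) < k),
        (x i * a i - a i * Real.log (a i)) +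
      s * F 1 (fun j => x (e j)) v - s * Real.log s := by
  have eF : F 1 x y = ∑ i, (x i * y i - y i * Real.log (y i)) := by
    simp only [F, Finset.sum_sub_distrib, one_mul]
  rw [eF, sum_head_tail k e he, add_sub_assoc]
  congr 1
  · apply Finset.sum_congr rfl
    intro i hi
    rw [h1 i (Finset.mem_filter.1 hi).2]
  · have : s * Real.log s = ∑ j, s * Real.log s * v j := by
      rw [← Finset.mul_sum, hv, mul_one]
    rw [this]
    simp only [F, one_mul, ← Finset.sum_sub_distrib, Finset.mul_sum]
    apply Finset.sum_congr rfl
    intro j _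
    rw [h2 j]
    by_cases h : v j = 0
    · simp [h]
    · rw [Real.log_mul hs.ne' h]
      ring

/-- if a_i = b_i for the first k coordinates and s_k > 0, the
box-constrained maximizer pins the first k coordinates at a and equals s_k
times the maximizer of the rescaled box-constrained subproblem on the last
K−k coordinates. -/
theorem bcsoftmax_fixed_head_recursion
    (K : ℕ) (hK : 1 ≤ K) (x a b : Fin K → ℝ)
    (ha : ∀ i, 0 ≤ a i ∧ a i < 1) (hasum : ∑ i, a i ≤ 1)
    (hb : ∀ i, 0 < b i ∧ b i ≤ 1) (hbsum : 1 ≤ ∑ i, b i)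
    (hab : ∀ i, a i ≤ b i)
    (k : ℕ) (hk : k < K)
    (hfix : ∀ i : Fin K, (i : ℕ) < k → a i = b i)
    (hs : 0 < sHead a k)
    (u : Fin (K - k) → ℝ)
    (hu : u ∈ simplex (K - k) ∧
      ∀ j : Fin (K - k),
        a ⟨k + j, by have := j.isLt; omega⟩ / sHead a k ≤ u j ∧
        u j ≤ b ⟨k + j, by have := j.isLt; omega⟩ / sHead a k)
    (humax : ∀ v : Fin (K - k) → ℝ,
      (v ∈ simplex (K - k) ∧
        ∀ j : Fin (K - k),
          a ⟨k + j, by have := j.isLt; omega⟩ / sHead a k ≤ v j ∧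
          v j ≤ b ⟨k + j, by have := j.isLt; omega⟩ / sHead a k) →
      F 1 (fun j => x ⟨k + j, by have := j.isLt; omega⟩) v ≤
        F 1 (fun j => x ⟨k + j, by have := j.isLt; omega⟩) u)
    (y : Fin K → ℝ)
    (hy : y ∈ simplex K ∧ ∀ i, a i ≤ y i ∧ y i ≤ b i)
    (hymax : ∀ z, (z ∈ simplex K ∧ ∀ i, a i ≤ z i ∧ z i ≤ b i) → F 1 x z ≤ F 1 x y) :
    (∀ i : Fin K, (i : ℕ) < k → y i = a i) ∧
      ∀ i : Fin K, ∀ h : k ≤ (i : ℕ),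
        y i = sHead a k * u ⟨(i : ℕ) - k, by have := i.isLt; omega⟩ := by
  have hhead : ∀ i : Fin K, (i : ℕ) < k → y i = a i := fun i hi =>
    le_antisymm ((hy.2 i).2.trans (hfix i hi).ge) (hy.2 i).1
  refine ⟨hhead, ?_⟩
  have hsdef : sHead a k = 1 - ∑ i ∈ Finset.univ.filter (fun i : Fin K => (i : ℕ) < k), a i := rfl
  generalize sHead a k = s at *
  obtain ⟨⟨hu0, hu1⟩, hubox⟩ := hu
  obtain ⟨⟨hy0, hy1⟩, hybox⟩ := hy
  let v : Fin (K - k) → ℝ := fun j => y ⟨k + j, by have := j.isLt; omega⟩ / s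
  have hyv : ∀ j : Fin (K - k), y ⟨k + j, by have := j.isLt; omega⟩ = s * v j := by
    intro j
    simp only [v]
    field_simp
  have hv0 : ∀ j, 0 ≤ v j := fun j => div_nonneg (hy0 _) hs.le
  have hv1 : ∑ j, v j = 1 := by
    have h := sum_head_tail k (fun j => ⟨k + j, by have := j.isLt; omega⟩) (fun _ => rfl) y
    rw [hy1, Finset.sum_congr rfl (fun i hi => hhead i (Finset.mem_filter.1 hi).2)] at h
    simp only [v]
    rw [← Finset.sum_div, div_eq_one_iff_eq hs.ne']
    linarith
  have hvbox : ∀ j : Fin (K - k),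
        a ⟨k + j, by have := j.isLt; omega⟩ / s ≤ v j ∧
        v j ≤ b ⟨k + j, by have := j.isLt; omega⟩ / s := fun j =>
    ⟨div_le_div_of_nonneg_right (hybox _).1 hs.le, div_le_div_of_nonneg_right (hybox _).2 hs.le⟩
  let z : Fin K → ℝ := fun i =>
    if h : (i : ℕ) < k then a i else s * u ⟨(i : ℕ) - k, by have := i.isLt; omega⟩
  have hz1 : ∀ i : Fin K, (i : ℕ) < k → z i = a i := fun i hi => by simp [z, hi]
  have hz2 : ∀ j : Fin (K - k), z ⟨k + j, by have := j.isLt; omega⟩ = s * u j := by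
    intro j
    simp [z]
  have htail : ∀ P : Fin K → Prop, (∀ i : Fin K, (i : ℕ) < k → P i) →
      (∀ j : Fin (K - k), P ⟨k + j, by have := j.isLt; omega⟩) → ∀ i, P i := by
    intro P p1 p2 i
    by_cases h : (i : ℕ) < k
    · exact p1 i h
    · have h3 := p2 ⟨(i : ℕ) - k, by have := i.isLt; omega⟩
      have e : (⟨k + ((i : ℕ) - k), by have := i.isLt; omega⟩ : Fin K) = i := by
        ext
        simp only
        omega
      simp only [e] at h3
      exact h3
  have hzbox : ∀ i, a i ≤ z i ∧ z i ≤ b i := by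
    apply htail
    · intro i hi
      rw [hz1 i hi]
      exact ⟨le_rfl, hab i⟩
    · intro j
      rw [hz2 j]
      have := hubox j
      rw [div_le_iff₀ hs, le_div_iff₀ hs] at this
      rw [mul_comm]
      exact this
  have hzs : ∑ i, z i = 1 := by
    rw [sum_head_tail k (fun j => ⟨k + j, by have := j.isLt; omega⟩) (fun _ => rfl) z,
      Finset.sum_congr rfl (fun i hi => hz1 i (Finset.mem_filter.1 hi).2),
      Finset.sum_congr rfl (fun j _ => hz2 j), ← Finset.mul_sum, hu1]
    linarith
  have hFzy := hymax z ⟨⟨fun i => (ha i).1.trans (hzbox i).1, hzs⟩, hzbox⟩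
  rw [F_head_tail k (fun j => ⟨k + j, by have := j.isLt; omega⟩) (fun _ => rfl) x a z s hs u hu1 hz1 hz2, F_head_tail k (fun j => ⟨k + j, by have := j.isLt; omega⟩) (fun _ => rfl) x a y s hs v hv1 hhead hyv] at hFzy
  have hFuv : F 1 (fun j : Fin (K - k) => x ⟨k + j, by have := j.isLt; omega⟩) u ≤
      F 1 (fun j : Fin (K - k) => x ⟨k + j, by have := j.isLt; omega⟩) v :=
    le_of_mul_le_mul_left (by linarith) hs
  have huv : u = v := by
    by_contra hne
    have hm := F_midpoint (fun j : Fin (K - k) => x ⟨k + j, by have := j.isLt; omega⟩) u v hu0 hv0 hne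
    have hw := humax (fun j => (u j + v j) / 2) ⟨⟨fun j => by
        have := hu0 j
        have := hv0 j
        positivity, by
        rw [← Finset.sum_div, Finset.sum_add_distrib, hu1, hv1]
        norm_num⟩, fun j => by
        have h1 := hubox j
        have h2 := hvbox j
        constructor
        · linarith [h1.1, h2.1]
        · linarith [h1.2, h2.2]⟩
    linarith
  intro i h
  rw [huv]
  simp only [v]
  have e : (⟨k + ((i : ℕ) - k), by have := i.isLt; omega⟩ : Fin K) = i := by
    ext
    simp only
    omega
  rw [e]
  field_simp
end

section
/- Let x ∈ ℝ^K and b ∈ U^K, let y be the maximizer of F_{1,x} over Δ^K ∩ {y : y_i ≤ b_i for all i}, and let V = {k ∈ {1,…,K} : y_k = b_k} be the set of indices saturated at their upper bounds. If i ∈ V and b_j/exp(x_j) ≤ b_i/exp(x_i), then j ∈ V. -/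
lemma ent_tangent (u v : ℝ) (hu : 0 < u) (hv : 0 ≤ v) :
    u * Real.log u + (1 + Real.log u) * (v - u) ≤ v * Real.log v := by
  rcases hv.eq_or_lt with h | h
  · subst h
    simp only [zero_mul]
    nlinarith
  · have h1 := Real.log_le_sub_one_of_pos (div_pos hu h)
    rw [Real.log_div hu.ne' h.ne'] at h1
    have h2 := mul_le_mul_of_nonneg_left h1 h.le
    have h3 : v * (u / v - 1) = u - v := by field_simp
    rw [h3] at h2
    nlinarith

lemma sum_two_change_s12 {K : ℕ} (g : Fin K → ℝ → ℝ) (y z : Fin K → ℝ) (i j : Fin K) (hne : i ≠ j)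
    (h : ∀ k, k ≠ i → k ≠ j → z k = y k) :
    ∑ k, g k (z k) = ∑ k, g k (y k) + (g i (z i) - g i (y i)) + (g j (z j) - g j (y j)) := by
  have h1 : ∑ k, (g k (z k) - g k (y k)) = (g i (z i) - g i (y i)) + (g j (z j) - g j (y j)) := by
    apply Fintype.sum_eq_add i j hne
    rintro k ⟨h1, h2⟩
    rw [h k h1 h2, sub_self]
  rw [Finset.sum_sub_distrib] at h1
  linarith

/-- for the maximizer y of F_{1,x} over the upper-bounded simplex,
if coordinate i is saturated (y_i = b_i) and b_j/exp(x_j) ≤ b_i/exp(x_i), then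
coordinate j is saturated as well. -/
theorem ubsoftmax_saturation_monotone
    (K : ℕ) (hK : 1 ≤ K) (x b : Fin K → ℝ)
    (hb : ∀ i, 0 < b i ∧ b i ≤ 1) (hbsum : 1 ≤ ∑ i, b i)
    (y : Fin K → ℝ)
    (hy : y ∈ simplex K ∧ ∀ i, y i ≤ b i)
    (hymax : ∀ z, (z ∈ simplex K ∧ ∀ i, z i ≤ b i) → F 1 x z ≤ F 1 x y)
    (i j : Fin K)
    (hi : y i = b i)
    (hij : b j / Real.exp (x j) ≤ b i / Real.exp (x i)) :
    y j = b j := by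
  by_contra hj
  have hne : i ≠ j := by
    rintro rfl
    exact hj hi
  obtain ⟨⟨hy0, hy1⟩, hyb⟩ := hy
  have hlt : y j < b j := lt_of_le_of_ne (hyb j) hj
  have ei := Real.exp_pos (x i)
  have ej := Real.exp_pos (x j)
  rw [div_le_div_iff₀ ej ei] at hij
  have hc := hy0 j
  obtain ⟨t, ht0, ht1, ht2⟩ : ∃ t : ℝ, 0 < t ∧ t ≤ b j - y j ∧
      (y j + t) * Real.exp (x i) < (b i - t) * Real.exp (x j) := by
    have hd : 0 < b j - y j := sub_pos.2 hlt
    refine ⟨(b j - y j) * Real.exp (x i) / (2 * (Real.exp (x i) + Real.exp (x j))), by positivity,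
      ?_, ?_⟩
    · rw [div_le_iff₀ (by positivity)]
      nlinarith [mul_pos hd ei, mul_pos hd ej]
    · have h : (b j - y j) * Real.exp (x i) / (2 * (Real.exp (x i) + Real.exp (x j))) *
        (Real.exp (x i) + Real.exp (x j)) = (b j - y j) * Real.exp (x i) / 2 := by
        field_simp
      nlinarith [mul_pos hd ei]
  have hct : 0 < y j + t := by linarith
  have hat : 0 < b i - t := by
    have h := (mul_pos hct ei).trans ht2
    exact pos_of_mul_pos_left h ej.le
  have hlog := Real.log_lt_log (mul_pos hct ei) ht2
  rw [Real.log_mul hct.ne' ei.ne', Real.log_mul hat.ne' ej.ne', Real.log_exp, Real.log_exp] at hlog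
  have t1 := ent_tangent (b i - t) (b i) hat (hb i).1.le
  have t2 := ent_tangent (y j + t) (y j) hct hc
  let z : Fin K → ℝ := fun k => if k = i then b i - t else if k = j then y j + t else y k
  have zi : z i = b i - t := by simp [z]
  have zj : z j = y j + t := by simp [z, hne.symm]
  have zk : ∀ k, k ≠ i → k ≠ j → z k = y k := fun k h1 h2 => by simp [z, h1, h2]
  have hz : z ∈ simplex K ∧ ∀ k, z k ≤ b k := by
    refine ⟨⟨fun k => ?_, ?_⟩, fun k => ?_⟩
    · by_cases h1 : k = i
      · rw [h1, zi]; exact hat.le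
      by_cases h2 : k = j
      · rw [h2, zj]; exact hct.le
      rw [zk k h1 h2]; exact hy0 k
    · have := sum_two_change_s12 (fun _ v => v) y z i j hne zk
      simp only [zi, zj, hi] at this
      linarith
    · by_cases h1 : k = i
      · rw [h1, zi]; linarith
      by_cases h2 : k = j
      · rw [h2, zj]; linarith
      rw [zk k h1 h2]; exact hyb k
  have hm := hymax z hz
  have s1 := sum_two_change_s12 (fun k v => x k * v) y z i j hne zk
  have s2 := sum_two_change_s12 (fun _ v => v * Real.log v) y z i j hne zk
  simp only [zi, zj, hi] at s1 s2
  unfold F at hm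
  rw [s1, s2] at hm
  have := mul_lt_mul_of_pos_left hlog ht0
  nlinarith
end
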